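/- There exist constants 0 < c < C such that the probability that the maximum vertex degree of the uniform random recursive tree T_n lies in the interval [c·ln n, C·ln n] tends to 1 as n → ∞. Here the degree of vertex j in T_n is the number of indices 1 ≤ i ≤ n−1 with p_i = j, plus 1 if j ≠ 0. -/

import Mathlib

open MeasureTheory ProbabilityTheory Filter

/-- The sample space of parent choices for the uniform random recursive tree on
`{0, 1, …, n-1}`: for each `j : Fin (n-1)`, the parent of vertex `j+1` is an element of
`{0, …, j}`, encoded as `Fin (j+1)`. -/
abbrev URTSpace (n : ℕ) : Type := (j : Fin (n - 1)) → Fin ((j : ℕ) + 1)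

/-- The law of the uniform random recursive tree: all the parents are chosen independently
and uniformly at random. -/
noncomputable def urtMeasure (n : ℕ) : Measure (URTSpace n) :=
  Measure.pi fun j => (PMF.uniformOfFintype (Fin ((j : ℕ) + 1))).toMeasure

/-- The degree of vertex `v` in the uniform random recursive tree with parent map `p`:
the number of vertices having `v` as parent, plus `1` for the edge to the parent of `v`
if `v` is not the root `0`. -/
def urtDegree (n : ℕ) (p : URTSpace n) (v : Fin n) : ℕ :=
  (Finset.univ.filter fun j : Fin (n - 1) => (p j : ℕ) = (v : ℕ)).card +
    (if (v : ℕ) = 0 then 0 else 1)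

/-- The maximum degree of the uniform random recursive tree with parent map `p`. -/
def urtMaxDegree (n : ℕ) (p : URTSpace n) : ℕ :=
  Finset.univ.sup (urtDegree n p)

instance urt_prob (n : ℕ) : IsProbabilityMeasure (urtMeasure n) := by
  unfold urtMeasure; infer_instance

/-- Number of children of `v`. -/
def urtX (n : ℕ) (p : URTSpace n) (v : ℕ) : ℕ :=
  (Finset.univ.filter fun j : Fin (n - 1) => (p j : ℕ) = v).card

lemma urtX_pow (n : ℕ) (p : URTSpace n) (v : ℕ) (a : ℝ) :
    a ^ urtX n p v = ∏ j : Fin (n - 1), (if (p j : ℕ) = v then a else 1) := by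
  rw [Finset.prod_ite]; simp [urtX]

lemma urt_coord (k v : ℕ) (a : ℝ) :
    ∫ x, (if (x : ℕ) = v then a else 1) ∂(PMF.uniformOfFintype (Fin (k + 1))).toMeasure
      = 1 + (if v < k + 1 then (a - 1) / ((k : ℝ) + 1) else 0) := by
  have hk : (k : ℝ) + 1 ≠ 0 := by positivity
  rw [PMF.integral_eq_sum]
  have h1 : ∀ x : Fin (k + 1), (if (x : ℕ) = v then a else 1) =
      1 + (if (x : ℕ) = v then a - 1 else 0) := by
    intro x; split_ifs <;> ring
  have h2 : ∑ x : Fin (k + 1), (if (x : ℕ) = v then a - 1 else 0)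
      = if v < k + 1 then a - 1 else 0 := by
    rw [Fin.sum_univ_eq_sum_range (fun x => if x = v then a - 1 else 0)]
    simp [Finset.sum_ite_eq']
  have h3 : ∀ x : Fin (k + 1), ((PMF.uniformOfFintype (Fin (k + 1))) x).toReal
      = ((k : ℝ) + 1)⁻¹ := by
    intro x
    rw [PMF.uniformOfFintype_apply, ENNReal.toReal_inv, ENNReal.toReal_natCast, Fintype.card_fin]
    push_cast; rfl
  simp only [h3, smul_eq_mul, ← Finset.mul_sum, h1]
  rw [Finset.sum_add_distrib, h2]
  simp only [Finset.sum_const, Finset.card_univ, Fintype.card_fin, nsmul_eq_mul]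
  push_cast
  split_ifs <;> field_simp <;> ring

lemma urt_moment (n v : ℕ) (a : ℝ) :
    ∫ p, a ^ urtX n p v ∂(urtMeasure n) =
      ∏ j ∈ Finset.range (n - 1), (1 + (if v < j + 1 then (a - 1) / ((j : ℝ) + 1) else 0)) := by
  simp only [urtX_pow]
  rw [urtMeasure, integral_fintype_prod_eq_prod
    (f := fun (j : Fin (n - 1)) (x : Fin ((j : ℕ) + 1)) => if (x : ℕ) = v then a else (1 : ℝ))]
  simp only [urt_coord]
  rw [Fin.prod_univ_eq_prod_range
    (fun j : ℕ => (1 + (if v < j + 1 then (a - 1) / ((j : ℝ) + 1) else 0)))]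

lemma urt_moment_two (n v : ℕ) (hn : 1 ≤ n) :
    ∫ p, (2 : ℝ) ^ urtX n p v ∂(urtMeasure n) ≤ n := by
  rw [urt_moment]
  obtain ⟨m, rfl⟩ : ∃ m, n = m + 1 := ⟨n - 1, by omega⟩
  simp only [Nat.add_sub_cancel]
  have h0 : ∀ j : ℕ, 0 ≤ 1 + (if v < j + 1 then ((2 : ℝ) - 1) / ((j : ℝ) + 1) else 0) := by
    intro j; norm_num; split_ifs <;> positivity
  induction m with
  | zero => simp
  | succ m ih =>
    rw [Finset.prod_range_succ]
    have h1 : 1 + (if v < m + 1 then ((2 : ℝ) - 1) / ((m : ℝ) + 1) else 0)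
        ≤ 1 + 1 / ((m : ℝ) + 1) := by
      have : (0 : ℝ) ≤ 1 / ((m : ℝ) + 1) := by positivity
      split_ifs
      · norm_num
      · linarith
    calc _ ≤ ((m + 1 : ℕ) : ℝ) * (1 + 1 / ((m : ℝ) + 1)) :=
          mul_le_mul (ih (by omega)) h1 (h0 m) (by positivity)
      _ = _ := by push_cast; field_simp

lemma urt_moment_half (n : ℕ) (hn : 1 ≤ n) :
    (∫ p, (1 / 2 : ℝ) ^ urtX n p 0 ∂(urtMeasure n)) ^ 2 * n ≤ 1 := by
  rw [urt_moment]
  obtain ⟨m, rfl⟩ : ∃ m, n = m + 1 := ⟨n - 1, by omega⟩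
  simp only [Nat.add_sub_cancel]
  induction m with
  | zero => simp
  | succ m ih =>
    rw [Finset.prod_range_succ]
    refine le_trans ?_ (ih (by omega))
    rw [mul_pow, mul_assoc]
    refine mul_le_mul_of_nonneg_left ?_ (sq_nonneg _)
    simp only [Nat.zero_lt_succ, if_true]
    push_cast
    have hm : (0 : ℝ) ≤ m := by positivity
    have : (1 + (1 / 2 - 1) / ((m : ℝ) + 1)) ^ 2 * (m + 1 + 1)
      = (m + 1) - (3 * m + 2) / (4 * (m + 1) ^ 2) := by
      field_simp; ring
    rw [this]
    have : 0 ≤ (3 * (m : ℝ) + 2) / (4 * (m + 1) ^ 2) := by positivity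
    linarith

lemma urt_upper (n v : ℕ) (hn : 1 ≤ n) :
    (urtMeasure n).real {p | 6 * Real.log n < (urtX n p v : ℝ) + 1} ≤ 2 / (n : ℝ) ^ 3 := by
  have hn' : (0 : ℝ) < n := by exact_mod_cast hn
  have hlog : 0 ≤ Real.log n := Real.log_natCast_nonneg n
  have hsub : {p : URTSpace n | 6 * Real.log n < (urtX n p v : ℝ) + 1} ⊆
      {p | (n : ℝ) ^ 4 / 2 ≤ (2 : ℝ) ^ urtX n p v} := by
    intro p hp
    simp only [Set.mem_ofPred_eq] at *
    rw [div_le_iff₀ (by norm_num), ← pow_succ]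
    rw [← Real.log_le_log_iff (by positivity) (by positivity), Real.log_pow, Real.log_pow]
    push_cast
    have := Real.log_two_gt_d9
    nlinarith
  have h1 := mul_meas_ge_le_integral_of_nonneg (μ := urtMeasure n)
    (f := fun p => (2 : ℝ) ^ urtX n p v) (ae_of_all _ fun p => by positivity)
    .of_finite ((n : ℝ) ^ 4 / 2)
  have h2 := urt_moment_two n v hn
  have h3 := measureReal_mono (μ := urtMeasure n) hsub
  refine h3.trans ?_
  rw [le_div_iff₀ (by positivity)]
  have h4 := h1.trans h2
  generalize (urtMeasure n).real _ = t at *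
  have : (t * n ^ 3) * n ≤ 2 * n := by nlinarith
  exact le_of_mul_le_mul_right this hn'

lemma urt_lower (n : ℕ) (hn : 1 ≤ n) :
    (urtMeasure n).real {p | (urtX n p 0 : ℝ) < (1 / 4) * Real.log n} ≤ (n : ℝ) ^ (-(1 / 4) : ℝ) := by
  have hn' : (0 : ℝ) < n := by exact_mod_cast hn
  have hlog : 0 ≤ Real.log n := Real.log_natCast_nonneg n
  set s : ℝ := (n : ℝ) ^ (-(1 / 4) : ℝ) with hs
  have hs0 : 0 < s := Real.rpow_pos_of_pos hn' _
  have hs4 : s ^ 4 * n = 1 := by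
    rw [hs, ← Real.rpow_natCast, ← Real.rpow_mul hn'.le]
    norm_num
    rw [Real.rpow_neg_one]; field_simp
  have hsub : {p : URTSpace n | (urtX n p 0 : ℝ) < (1 / 4) * Real.log n} ⊆
      {p | s ≤ (1 / 2 : ℝ) ^ urtX n p 0} := by
    intro p hp
    simp only [Set.mem_ofPred_eq] at *
    rw [← Real.log_le_log_iff hs0 (by positivity), Real.log_pow, hs, Real.log_rpow hn']
    have h := Real.log_two_lt_d9
    have h' := Real.log_two_gt_d9
    have : Real.log (1 / 2) = - Real.log 2 := by rw [one_div, Real.log_inv]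
    rw [this]
    have : (0 : ℝ) ≤ urtX n p 0 := by positivity
    nlinarith
  have h1 := mul_meas_ge_le_integral_of_nonneg (μ := urtMeasure n)
    (f := fun p => (1 / 2 : ℝ) ^ urtX n p 0) (ae_of_all _ fun p => by positivity)
    .of_finite s
  have h2 := urt_moment_half n hn
  refine (measureReal_mono (μ := urtMeasure n) hsub).trans ?_
  have hI0 : 0 ≤ ∫ p, (1 / 2 : ℝ) ^ urtX n p 0 ∂(urtMeasure n) :=
    integral_nonneg fun p => by positivity
  generalize (urtMeasure n).real _ = t at *
  generalize (∫ p, (1 / 2 : ℝ) ^ urtX n p 0 ∂(urtMeasure n)) = I at *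
  have hI : I ≤ s ^ 2 := by
    refine (pow_le_pow_iff_left₀ hI0 (sq_nonneg s) two_ne_zero).1 ?_
    refine le_of_mul_le_mul_right (a := (n : ℝ)) ?_ hn'
    calc _ ≤ (1 : ℝ) := h2
      _ = _ := by rw [← hs4]; ring
  refine le_of_mul_le_mul_left ?_ hs0
  nlinarith

lemma urt_degree_eq (n : ℕ) (p : URTSpace n) (v : Fin n) :
    urtDegree n p v = urtX n p v + (if (v : ℕ) = 0 then 0 else 1) := rfl

lemma urt_good (n : ℕ) (hn : 1 ≤ n) :
    1 - ((n : ℝ) ^ (-(1 / 4) : ℝ) + 2 / (n : ℝ) ^ 2) ≤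
    (urtMeasure n {p | (1 / 4) * Real.log n ≤ (urtMaxDegree n p : ℝ) ∧
            (urtMaxDegree n p : ℝ) ≤ 6 * Real.log n}).toReal := by
  have hn' : (0 : ℝ) < n := by exact_mod_cast hn
  have hlog : 0 ≤ Real.log n := Real.log_natCast_nonneg n
  change _ ≤ (urtMeasure n).real _
  set G := {p : URTSpace n | (1 / 4) * Real.log n ≤ (urtMaxDegree n p : ℝ) ∧
            (urtMaxDegree n p : ℝ) ≤ 6 * Real.log n} with hG
  have hc : (urtMeasure n).real Gᶜ = 1 - (urtMeasure n).real G :=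
    probReal_compl_eq_one_sub (Set.toFinite G).measurableSet
  have hsub : Gᶜ ⊆ {p | (urtX n p 0 : ℝ) < (1 / 4) * Real.log n} ∪
      ⋃ v : Fin n, {p | 6 * Real.log n < (urtX n p v : ℝ) + 1} := by
    intro p hp
    by_contra hcon
    simp only [Set.mem_union, Set.mem_iUnion, Set.mem_ofPred_eq, not_or, not_exists, not_lt] at hcon
    obtain ⟨ha, hb⟩ := hcon
    refine hp ⟨?_, ?_⟩
    · refine ha.trans ?_
      have : urtX n p 0 ≤ urtMaxDegree n p := by
        have := Finset.le_sup (f := urtDegree n p) (Finset.mem_univ (⟨0, hn⟩ : Fin n))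
        simpa [urt_degree_eq, urtMaxDegree] using this
      exact_mod_cast this
    · have : Nonempty (Fin n) := ⟨⟨0, hn⟩⟩
      obtain ⟨v, -, hv⟩ := Finset.exists_mem_eq_sup Finset.univ Finset.univ_nonempty
        (urtDegree n p)
      rw [urtMaxDegree, hv, urt_degree_eq]
      refine le_trans ?_ (hb v)
      push_cast
      split_ifs <;> simp
  have h1 := (measureReal_mono (μ := urtMeasure n) hsub).trans (measureReal_union_le _ _)
  have h2 : (urtMeasure n).real (⋃ v : Fin n, {p | 6 * Real.log n < (urtX n p v : ℝ) + 1})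
      ≤ 2 / (n : ℝ) ^ 2 := by
    refine (measureReal_iUnion_fintype_le _).trans ?_
    refine (Finset.sum_le_sum fun (v : Fin n) _ => urt_upper n (v : ℕ) hn).trans ?_
    simp only [Finset.sum_const, Finset.card_univ, Fintype.card_fin, nsmul_eq_mul]
    apply le_of_eq; field_simp
  have h3 := urt_lower n hn
  linarith

/-- With high probability the maximum degree of the uniform random recursive tree is of order
`Θ(ln n)`: there are constants `0 < c < C` such that the probability that the maximum degree
lies in `[c·ln n, C·ln n]` tends to `1` as `n → ∞`. -/
theorem urt_maxDegree :
    ∃ c C : ℝ, 0 < c ∧ c < C ∧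
      Tendsto (fun n : ℕ =>
          (urtMeasure n {p | c * Real.log n ≤ (urtMaxDegree n p : ℝ) ∧
            (urtMaxDegree n p : ℝ) ≤ C * Real.log n}).toReal)
        atTop (nhds 1) := by
  refine ⟨1 / 4, 6, by norm_num, by norm_num, ?_⟩
  have h1 : Tendsto (fun n : ℕ => 1 - ((n : ℝ) ^ (-(1 / 4) : ℝ) + 2 / (n : ℝ) ^ 2))
      atTop (nhds 1) := by
    have ha : Tendsto (fun n : ℕ => (n : ℝ) ^ (-(1 / 4) : ℝ)) atTop (nhds 0) :=
      (tendsto_rpow_neg_atTop (by norm_num)).comp tendsto_natCast_atTop_atTop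
    have hb : Tendsto (fun n : ℕ => 2 / (n : ℝ) ^ 2) atTop (nhds 0) :=
      Tendsto.div_atTop tendsto_const_nhds
        ((tendsto_pow_atTop (by norm_num)).comp tendsto_natCast_atTop_atTop)
    simpa using (ha.add hb).const_sub 1
  refine tendsto_of_tendsto_of_tendsto_of_le_of_le' h1 tendsto_const_nhds ?_ ?_
  · filter_upwards [eventually_ge_atTop 1] with n hn using urt_good n hn
  · exact Eventually.of_forall fun n => measureReal_le_one
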